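/- Assume λ, α, θ > 0, β + θ < 1, (H2), m_τ, K_τ > 0 and 0 < τ < 1. Let (X, ρ) be a minimizer of J_{(X⁰,ρ⁰)} over 𝒜 with X ≥ X⁰, and let T be the monotone optimal transport map of its transport structure. Then for every ξ ∈ C_c^∞(0,X): ∫₀^X ξ(x) ((x − T(x))/τ) ρ(x) dx − ∫₀^X ρ(x) ξ'(x) dx = 0. -/

import Mathlib

/-!
The equation is the first variation of the JKO functional along inner variations. For `|t|` small,
`x ↦ x + t ξ(x)` is a diffeomorphism of `(0,X)`; let `σ` be the image density of `ρ` and `Ψ` the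
inverse diffeomorphism. Then `(X, σ)` is admissible (`Deform.memAdmSet`) and has the same mass
functional (`Deform.Mfun_eq`), so that only two terms of the functional change.

* The map `T ∘ Ψ` transports `σ` to `ρ⁰` (`PreTransport.deform`). Any such map induces a coupling
  (`PreTransport.W2_le`), hence `W₂²(σ,ρ⁰) ≤ W₂²(ρ,ρ⁰) + 2t ∫ ξ (x - T) ρ + t² ∫ ξ² ρ`.
  The coupling has to live on `(0,Λ)`, with `Λ = max(x_σ, x_{ρ⁰})` possibly smaller than `X`;
  on `(Λ,X)` both densities are `1` and a monotone transport is the identity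
  (`PreTransport.eq_id`), so that part can be cut off.
* The entropy changes by `-∫ log(1 + t ξ') ρ ≤ -t ∫ ξ' ρ + 2t² ∫ (ξ')² ρ` (`Deform.entropy_eq`).

Minimality gives `0 ≤ t p + t² q` for all small `t` of either sign, where `p` is the left-hand
side of the equation, and therefore `p = 0` (`first_variation`).

Admissible densities are only locally integrable on the open half-line, so the integrals in the
functional can take the junk value `0`. This does not happen for a minimizer. If `ρ` were not
integrable near `0`, then `𝐌(ρ) = 0` would make the mass difference nonzero, and the transport
structure would bound the mass of `ρ` after all (`density_integrable`). If the entropy density were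
not integrable, the entropy would be the constant `0` along the variation; the first variation
would then say that `(x - T) ρ = 0`, so that `ρ ≤ 1` (`PreTransport.le_one`), and the entropy
density would be bounded on `(0,X)`.
-/

open MeasureTheory Real Set ENNReal Filter Topology

noncomputable section

/-- The threshold `ρ₋ = exp(β - θ - 1)`. -/
def rhoMinus (β θ : ℝ) : ℝ := Real.exp (β - θ - 1)

/-- The threshold `ρ₊ = exp(β + θ - 1)`. -/
def rhoPlus (β θ : ℝ) : ℝ := Real.exp (β + θ - 1)

/-- Membership in the class `𝔸` of admissible densities on `ℝ₊`:
nonnegative a.e., locally integrable together with `ρ ln ρ`, and `≡ 1` a.e. eventually. -/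
def MemAdm (ρ : ℝ → ℝ) : Prop :=
  (∀ᵐ x : ℝ, 0 < x → 0 ≤ ρ x) ∧
  LocallyIntegrableOn ρ (Ioi 0) volume ∧
  LocallyIntegrableOn (fun x => ρ x * Real.log (ρ x)) (Ioi 0) volume ∧
  ∃ x : ℝ, 0 < x ∧ (∀ᵐ y : ℝ, y ∈ Ioi x → ρ y = 1)

/-- `x_ρ`, the infimum of the points after which `ρ ≡ 1` a.e. -/
def xA (ρ : ℝ → ℝ) : ℝ :=
  sInf {x : ℝ | 0 < x ∧ ∀ᵐ y : ℝ, y ∈ Ioi x → ρ y = 1}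

/-- Membership of a pair `(X, ρ)` in the admissible set `𝒜`. -/
def MemAdmSet (X : ℝ) (ρ : ℝ → ℝ) : Prop := MemAdm ρ ∧ xA ρ ≤ X

/-- `𝐌(ρ) = -∫_{ℝ₊} (1 - ρ)`. -/
def Mfun (ρ : ℝ → ℝ) : ℝ := -∫ x in Ioi (0:ℝ), (1 - ρ x)

/-- `M(ρ, ρ̃) = 𝐌(ρ) - 𝐌(ρ̃)`. -/
def Mdiff (ρ ρt : ℝ → ℝ) : ℝ := Mfun ρ - Mfun ρt

/-- `f(r) = r (ln r - β) + β`. -/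
def fEnt (β r : ℝ) : ℝ := r * (Real.log r - β) + β

/-- The measure `ν(ρ, ρ̃) = ρ · Leb⌊(0,Λ) + (M(ρ̃,ρ))₊ δ₀`, `Λ = max(x_ρ, x_ρ̃)`. -/
def nuMeas (ρ ρt : ℝ → ℝ) : Measure ℝ :=
  (volume.withDensity (fun x => ENNReal.ofReal (ρ x))).restrict
      (Ioo 0 (max (xA ρ) (xA ρt)))
    + (ENNReal.ofReal (Mdiff ρt ρ)) • Measure.dirac 0

/-- The squared Wasserstein distance `𝐖₂²(ρ, ρ̃)`: infimum of the quadratic transport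
cost over couplings of `ν(ρ,ρ̃)` and `ν(ρ̃,ρ)`. -/
def W2sq (ρ ρt : ℝ → ℝ) : ℝ :=
  sInf {r : ℝ | ∃ γ : Measure (ℝ × ℝ),
    γ.map Prod.fst = nuMeas ρ ρt ∧ γ.map Prod.snd = nuMeas ρt ρ ∧
    r = ∫ p, (p.1 - p.2)^2 ∂γ}

/-- The penalty function `p_τ(m) = (K_τ/2) ((-m - m_τ)₊)²`. -/
def ptau (Kτ mτ m : ℝ) : ℝ := Kτ / 2 * (max (-m - mτ) 0)^2

/-- The energy functional `E_{(X⁰,ρ⁰)}(X,ρ)`. -/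
def Efun (α β θ : ℝ) (ρ0 : ℝ → ℝ) (X : ℝ) (ρ : ℝ → ℝ) : ℝ :=
  (∫ x in Ioi (0:ℝ), fEnt β (ρ x)) + θ * |Mdiff ρ ρ0| - α * X

/-- The squared tensorized metric `𝐝²((X,ρ),(X⁰,ρ⁰))`. -/
def dsq (lam : ℝ) (X0 : ℝ) (ρ0 : ℝ → ℝ) (X : ℝ) (ρ : ℝ → ℝ) : ℝ :=
  W2sq ρ ρ0 + lam * (X - X0)^2

/-- The JKO functional `J_{(X⁰,ρ⁰)}`. -/
def Jfun (lam α β θ τ Kτ mτ : ℝ) (X0 : ℝ) (ρ0 : ℝ → ℝ) (X : ℝ) (ρ : ℝ → ℝ) : ℝ :=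
  dsq lam X0 ρ0 X ρ / (2 * τ) + Efun α β θ ρ0 X ρ + ptau Kτ mτ (Mdiff ρ ρ0)

/-- `(X, ρ)` is a minimizer of the JKO functional over `𝒜`. -/
def IsJKOMin (lam α β θ τ Kτ mτ : ℝ) (X0 : ℝ) (ρ0 : ℝ → ℝ) (X : ℝ) (ρ : ℝ → ℝ) : Prop :=
  MemAdmSet X ρ ∧
  ∀ Y : ℝ, ∀ σ : ℝ → ℝ, MemAdmSet Y σ →
    Jfun lam α β θ τ Kτ mτ X0 ρ0 X ρ ≤ Jfun lam α β θ τ Kτ mτ X0 ρ0 Y σ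

/-- Hypothesis (H2) on the initial data `(X⁰, ρ⁰)`, with bounds `ρ_min, ρ_max`
and with `ρ0'` a derivative of `ρ⁰` on `[0,X⁰]` witnessing `C^{1,1}` regularity. -/
def H2 (β θ X0 ρmin ρmax : ℝ) (ρ0 ρ0' : ℝ → ℝ) : Prop :=
  0 < X0 ∧
  (∀ x : ℝ, 0 < ρ0 x) ∧
  (∀ x ∈ Icc 0 X0, HasDerivWithinAt ρ0 (ρ0' x) (Icc 0 X0) x) ∧
  (∃ K : NNReal, LipschitzOnWith K ρ0' (Icc 0 X0)) ∧
  (∀ x : ℝ, X0 < x → ρ0 x = 1) ∧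
  ρ0 0 ∈ Icc (rhoMinus β θ) (rhoPlus β θ) ∧
  0 < ρmin ∧ (∀ x ∈ Ioc 0 X0, ρmin ≤ ρ0 x ∧ ρ0 x ≤ ρmax) ∧ ρmax ≤ 1

/-- The monotone transport structure in the case `M(ρ,ρ⁰) ≥ 0`: a nondecreasing map
`T₊ : [0,X] → [0,X]`, vanishing on `[0,ℓ₊]`, pushing `ρ·Leb⌊(ℓ₊,X)` to `ρ⁰·Leb⌊(0,X)`,
with `M = ∫₀^{ℓ₊} ρ` and realizing the squared Wasserstein distance. -/
def TransportPlus (ρ0 ρ : ℝ → ℝ) (X : ℝ) (T : ℝ → ℝ) (ℓ : ℝ) : Prop :=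
  0 ≤ ℓ ∧ Measurable T ∧ MonotoneOn T (Icc 0 X) ∧
  (∀ x ∈ Icc 0 X, T x ∈ Icc 0 X) ∧
  (∀ x ∈ Icc 0 ℓ, T x = 0) ∧ T X = X ∧
  Measure.map T ((volume.withDensity (fun x => ENNReal.ofReal (ρ x))).restrict (Ioo ℓ X))
    = (volume.withDensity (fun x => ENNReal.ofReal (ρ0 x))).restrict (Ioo 0 X) ∧
  Mdiff ρ ρ0 = ∫ x in (0:ℝ)..ℓ, ρ x ∧
  W2sq ρ ρ0 = ∫ x in (0:ℝ)..X, (x - T x)^2 * ρ x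

/-- The monotone transport structure in the case `M(ρ,ρ⁰) < 0`. -/
def TransportMinus (ρ0 ρ : ℝ → ℝ) (X : ℝ) (T : ℝ → ℝ) (ℓ : ℝ) : Prop :=
  0 < ℓ ∧ Measurable T ∧ MonotoneOn T (Icc 0 X) ∧
  (∀ x ∈ Icc 0 X, T x ∈ Icc ℓ X) ∧
  T 0 = ℓ ∧ T X = X ∧
  Measure.map T ((volume.withDensity (fun x => ENNReal.ofReal (ρ x))).restrict (Ioo 0 X))
    = (volume.withDensity (fun x => ENNReal.ofReal (ρ0 x))).restrict (Ioo ℓ X) ∧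
  -(Mdiff ρ ρ0) = ∫ y in (0:ℝ)..ℓ, ρ0 y ∧
  W2sq ρ ρ0 = (∫ x in (0:ℝ)..X, (x - T x)^2 * ρ x) + ∫ y in (0:ℝ)..ℓ, y^2 * ρ0 y

/-- Transport structure with sign convention: `T` is `T₊` (with some `ℓ₊`, and `ℓ₋ = ℓ`
is taken `= 0`) when `M ≥ 0`, and `T₋` with `ℓ₋ = ℓ > 0` when `M < 0`. -/
def TransportStruct (ρ0 ρ : ℝ → ℝ) (X : ℝ) (T : ℝ → ℝ) (ℓ : ℝ) : Prop :=
  (0 ≤ Mdiff ρ ρ0 ∧ ℓ = 0 ∧ ∃ ℓp : ℝ, TransportPlus ρ0 ρ X T ℓp) ∨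
  (Mdiff ρ ρ0 < 0 ∧ TransportMinus ρ0 ρ X T ℓ)

/-- `ρ̄` is the continuous representative of `ρ` on `[0,X]`. -/
def ContRep (X : ℝ) (ρ ρb : ℝ → ℝ) : Prop :=
  ContinuousOn ρb (Icc 0 X) ∧ (∀ᵐ x : ℝ, x ∈ Ioo 0 X → ρ x = ρb x)

/-! ### Inner variations -/

/-- The data of an inner variation of `(0,X)`: `x ↦ x + η x` is a `C¹` diffeomorphism of `ℝ`
equal to the identity outside `(0,X)`, and `Ψ` is its inverse. -/
structure Deform (X : ℝ) (η Ψ : ℝ → ℝ) : Prop where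
  smooth : ContDiff ℝ 1 η
  zero : ∀ x, x ∉ Ioo 0 X → η x = 0
  dzero : ∀ x, x ∉ Ioo 0 X → deriv η x = 0
  bd : ∀ x, |deriv η x| ≤ 1 / 2
  left : ∀ x, Ψ (x + η x) = x
  right : ∀ y, Ψ y + η (Ψ y) = y
  mono : StrictMono Ψ

/-- The density of the image of the measure `ρ dx` under `x ↦ x + η x`, whose inverse is `Ψ`. -/
def pushD (ρ η Ψ : ℝ → ℝ) (y : ℝ) : ℝ := ρ (Ψ y) / (1 + deriv η (Ψ y))

lemma exists_deform (X : ℝ) (η : ℝ → ℝ) (hs : ContDiff ℝ 1 η)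
    (hz : ∀ x, x ∉ Ioo 0 X → η x = 0) (hdz : ∀ x, x ∉ Ioo 0 X → deriv η x = 0)
    (hb : ∀ x, |deriv η x| ≤ 1 / 2) : ∃ Ψ, Deform X η Ψ := by
  have hd : ∀ x, HasDerivAt (fun x => x + η x) (1 + deriv η x) x := fun x =>
    (hasDerivAt_id x).add ((hs.differentiable (by norm_num) x).hasDerivAt)
  have hmono : StrictMono (fun x => x + η x) := by
    apply strictMono_of_deriv_pos
    intro x
    rw [(hd x).deriv]
    have := abs_le.1 (hb x)
    linarith [this.1]
  have hcont : Continuous (fun x => x + η x) := continuous_id.add hs.continuous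
  have hsurj : Function.Surjective (fun x => x + η x) := by
    apply hcont.surjective
    · apply tendsto_id.congr'
      filter_upwards [eventually_ge_atTop X] with x hx
      simp [hz x (fun h => absurd h.2 (not_lt.2 hx))]
    · apply tendsto_id.congr'
      filter_upwards [eventually_le_atBot 0] with x hx
      simp [hz x (fun h => absurd h.1 (not_lt.2 hx))]
  let e := hmono.orderIsoOfSurjective _ hsurj
  refine ⟨e.symm, hs, hz, hdz, hb, fun x => e.symm_apply_apply x, fun y => e.apply_symm_apply y,
    e.symm.strictMono⟩

namespace Deform

variable {X : ℝ} {η Ψ : ℝ → ℝ}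

lemma hasDeriv (h : Deform X η Ψ) (x : ℝ) :
    HasDerivAt (fun x => x + η x) (1 + deriv η x) x :=
  (hasDerivAt_id x).add ((h.smooth.differentiable (by norm_num) x).hasDerivAt)

lemma pos (h : Deform X η Ψ) (x : ℝ) : 0 < 1 + deriv η x := by
  have := abs_le.1 (h.bd x)
  linarith [this.1]

lemma contDeriv (h : Deform X η Ψ) : Continuous (deriv η) :=
  h.smooth.continuous_deriv (by norm_num)

lemma strictMono (h : Deform X η Ψ) : StrictMono (fun x => x + η x) := by
  intro x y hxy
  by_contra hc
  have := h.mono.monotone (not_lt.1 hc)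
  simp only [h.left] at this
  linarith

lemma inj (h : Deform X η Ψ) : Function.Injective (fun x => x + η x) := h.strictMono.injective

lemma meas (h : Deform X η Ψ) : Measurable Ψ := h.mono.monotone.measurable

lemma cont (h : Deform X η Ψ) : Continuous (fun x => x + η x) :=
  continuous_id.add h.smooth.continuous

lemma image (h : Deform X η Ψ) (s : Set ℝ) : (fun x => x + η x) '' s = Ψ ⁻¹' s := by
  ext y
  constructor
  · rintro ⟨x, hx, rfl⟩
    simpa [h.left] using hx
  · intro hy
    exact ⟨Ψ y, hy, h.right y⟩

lemma psi_lt (h : Deform X η Ψ) {x y : ℝ} : Ψ y < x ↔ y < x + η x := by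
  constructor
  · intro hh; simpa only [h.right] using h.strictMono hh
  · intro hh; simpa only [h.left] using h.mono hh

lemma lt_psi (h : Deform X η Ψ) {x y : ℝ} : x < Ψ y ↔ x + η x < y := by
  constructor
  · intro hh; simpa only [h.right] using h.strictMono hh
  · intro hh; simpa only [h.left] using h.mono hh

lemma psi_le (h : Deform X η Ψ) {x y : ℝ} : Ψ y ≤ x ↔ y ≤ x + η x := by
  rw [← not_lt, ← not_lt, h.lt_psi]

lemma le_psi (h : Deform X η Ψ) {x y : ℝ} : x ≤ Ψ y ↔ x + η x ≤ y := by
  rw [← not_lt, ← not_lt, h.psi_lt]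

lemma eta0 (h : Deform X η Ψ) : η 0 = 0 := h.zero 0 (fun hh => lt_irrefl _ hh.1)

lemma etaX (h : Deform X η Ψ) : η X = 0 := h.zero X (fun hh => lt_irrefl _ hh.2)

lemma psi_pos (h : Deform X η Ψ) {y : ℝ} : 0 < Ψ y ↔ 0 < y := by
  rw [h.lt_psi, h.eta0]; simp

lemma psi_lt_X (h : Deform X η Ψ) {y : ℝ} : Ψ y < X ↔ y < X := by
  rw [h.psi_lt, h.etaX]; simp

lemma psi_out (h : Deform X η Ψ) {y : ℝ} (hy : X ≤ y) : Ψ y = y := by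
  have := h.left y
  rwa [h.zero y (fun hh => absurd hh.2 (not_lt.2 hy)), add_zero] at this

lemma pushD_apply (h : Deform X η Ψ) (ρ : ℝ → ℝ) (x : ℝ) :
    pushD ρ η Ψ (x + η x) = ρ x / (1 + deriv η x) := by
  simp [pushD, h.left]

lemma setIntegral (h : Deform X η Ψ) {s : Set ℝ} (hs : MeasurableSet s) (g : ℝ → ℝ) :
    ∫ y in Ψ ⁻¹' s, g y = ∫ x in s, (1 + deriv η x) * g (x + η x) := by
  rw [← h.image, integral_image_eq_integral_abs_deriv_smul hs
    (fun x _ => (h.hasDeriv x).hasDerivWithinAt) h.inj.injOn]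
  simp only [abs_of_pos (h.pos _), smul_eq_mul]

lemma integrableOn (h : Deform X η Ψ) {s : Set ℝ} (hs : MeasurableSet s) (g : ℝ → ℝ) :
    IntegrableOn g (Ψ ⁻¹' s) ↔ IntegrableOn (fun x => (1 + deriv η x) * g (x + η x)) s := by
  rw [← h.image, integrableOn_image_iff_integrableOn_abs_deriv_smul hs
    (fun x _ => (h.hasDeriv x).hasDerivWithinAt) h.inj.injOn]
  simp only [abs_of_pos (h.pos _), smul_eq_mul]

lemma pre_Ioi (h : Deform X η Ψ) : Ψ ⁻¹' (Ioi 0) = Ioi 0 := by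
  ext y; simp [h.psi_pos]

lemma pre_Ioo (h : Deform X η Ψ) : Ψ ⁻¹' (Ioo 0 X) = Ioo 0 X := by
  ext y; simp [h.psi_pos, h.psi_lt_X]

/-- The measure with density `pushD ρ η Ψ` is the image of the measure with density `ρ`. -/
lemma withDensity_apply_preimage (h : Deform X η Ψ) {s : Set ℝ} (hs : MeasurableSet s)
    (ρ : ℝ → ℝ) :
    (volume.withDensity (fun x => ENNReal.ofReal (pushD ρ η Ψ x))) (Ψ ⁻¹' s)
      = (volume.withDensity (fun x => ENNReal.ofReal (ρ x))) s := by
  rw [withDensity_apply _ (h.meas hs), withDensity_apply _ hs, ← h.image,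
    lintegral_image_eq_lintegral_abs_deriv_mul hs
    (fun x _ => (h.hasDeriv x).hasDerivWithinAt) h.inj.injOn]
  apply setLIntegral_congr_fun hs
  intro x _
  simp only [abs_of_pos (h.pos _), h.pushD_apply]
  rw [← ENNReal.ofReal_mul (h.pos x).le, mul_div_cancel₀ _ (h.pos x).ne']

lemma map_restrict (h : Deform X η Ψ) {s : Set ℝ} (hs : MeasurableSet s)
    (ρ : ℝ → ℝ) :
    Measure.map Ψ ((volume.withDensity (fun x => ENNReal.ofReal (pushD ρ η Ψ x))).restrict
        (Ψ ⁻¹' s))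
      = (volume.withDensity (fun x => ENNReal.ofReal (ρ x))).restrict s := by
  ext A hA
  rw [Measure.map_apply h.meas hA, Measure.restrict_apply (h.meas hA), Measure.restrict_apply hA,
    ← preimage_inter, h.withDensity_apply_preimage (hA.inter hs)]

lemma ae_psi (h : Deform X η Ψ) {p : ℝ → Prop} (hp : ∀ᵐ x : ℝ, p x) : ∀ᵐ y : ℝ, p (Ψ y) := by
  rw [ae_iff] at hp ⊢
  have := addHaar_image_eq_zero_of_differentiableOn_of_addHaar_eq_zero volume
    (s := {x | ¬ p x}) (f := fun x => x + η x)
    (fun x _ => (h.hasDeriv x).differentiableAt.differentiableWithinAt) hp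
  rwa [h.image] at this

end Deform

lemma ae_eq_one_of_xA_lt {ρ : ℝ → ℝ}
    (hne : ∃ x : ℝ, 0 < x ∧ (∀ᵐ y : ℝ, y ∈ Ioi x → ρ y = 1)) :
    ∀ᵐ y : ℝ, xA ρ < y → ρ y = 1 := by
  have key : ∀ n : ℕ, ∀ᵐ y : ℝ, xA ρ + 1 / ((n : ℝ) + 1) < y → ρ y = 1 := by
    intro n
    have hlt : xA ρ < xA ρ + 1 / ((n : ℝ) + 1) := by
      have : (0:ℝ) < 1 / ((n : ℝ) + 1) := by positivity
      linarith
    obtain ⟨x, ⟨_, hx⟩, hxl⟩ := exists_lt_of_csInf_lt 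
      (s := {x : ℝ | 0 < x ∧ ∀ᵐ y : ℝ, y ∈ Ioi x → ρ y = 1}) hne hlt
    filter_upwards [hx] with y hy hy2
    exact hy (hxl.trans hy2)
  filter_upwards [ae_all_iff.2 key] with y hy hlt
  obtain ⟨n, hn⟩ := exists_nat_one_div_lt (sub_pos.2 hlt)
  exact hy n (by linarith)

lemma xA_nonneg (ρ : ℝ → ℝ) : 0 ≤ xA ρ := Real.sInf_nonneg (fun _ hx => hx.1.le)

lemma xA_le {ρ : ℝ → ℝ} {X : ℝ} (hX : 0 < X) (h : ∀ᵐ y : ℝ, X < y → ρ y = 1) : xA ρ ≤ X :=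
  csInf_le ⟨0, fun _ hx => hx.1.le⟩ ⟨hX, h⟩

/-- An inner variation of an admissible pair is admissible. -/
lemma Deform.memAdmSet {X : ℝ} {η Ψ ρ : ℝ → ℝ} (h : Deform X η Ψ) (hX : 0 < X)
    (hρ : MemAdmSet X ρ) : MemAdmSet X (pushD ρ η Ψ) := by
  obtain ⟨⟨hnn, hli, hll, hev⟩, hxA⟩ := hρ
  have h1 : ∀ᵐ y : ℝ, X < y → ρ y = 1 := by
    filter_upwards [ae_eq_one_of_xA_lt hev] with y hy hlt
    exact hy (hxA.trans_lt hlt)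
  have h2 : ∀ᵐ y : ℝ, X < y → pushD ρ η Ψ y = 1 := by
    filter_upwards [h1] with y hy hlt
    rw [pushD, h.psi_out hlt.le, hy hlt, h.dzero y (fun hh => absurd hh.2 (not_lt.2 hlt.le))]
    norm_num
  refine ⟨⟨?_, ?_, ?_, X, hX, h2⟩, xA_le hX h2⟩
  · filter_upwards [h.ae_psi hnn] with y hy hlt
    exact div_nonneg (hy (h.psi_pos.2 hlt)) (h.pos _).le
  -- Both local integrability claims: compact subsets of `(0,∞)` are preimages of such sets.
  all_goals
    have hcpt : ∀ k : Set ℝ, k ⊆ Ioi 0 → IsCompact k →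
        ∃ k' ⊆ Ioi 0, IsCompact k' ∧ k = Ψ ⁻¹' k' := by
      intro k hk hkc
      refine ⟨(fun x => x + η x) ⁻¹' k, ?_, ?_, ?_⟩
      · intro x hx
        have : 0 < x + η x := hk hx
        rw [← h.psi_pos, h.left] at this
        exact this
      · have hbdd : (fun x => x + η x) ⁻¹' k = Ψ '' k := by
          ext x
          constructor
          · intro hx; exact ⟨_, hx, h.left x⟩
          · rintro ⟨y, hy, rfl⟩; simpa [h.right] using hy
        obtain ⟨lo, hlo⟩ := hkc.bddBelow
        obtain ⟨up, hup⟩ := hkc.bddAbove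
        apply IsCompact.of_isClosed_subset (isCompact_Icc (a := Ψ lo) (b := Ψ up))
          (hkc.isClosed.preimage h.cont)
        rw [hbdd]
        rintro _ ⟨y, hy, rfl⟩
        exact ⟨h.mono.monotone (hlo hy), h.mono.monotone (hup hy)⟩
      · ext y; simp [h.right]
    rw [locallyIntegrableOn_iff isOpen_Ioi.isLocallyClosed] at hli hll ⊢
    intro k hk hkc
    obtain ⟨k', hk', hkc', rfl⟩ := hcpt k hk hkc
    rw [h.integrableOn hkc'.measurableSet]
  · refine (hli k' hk' hkc').congr (Eventually.of_forall fun x => ?_)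
    simp only [h.pushD_apply]
    rw [mul_div_cancel₀ _ (h.pos x).ne']
  · have hi : IntegrableOn (fun x => ρ x * Real.log (ρ x)
        - Real.log (1 + deriv η x) * ρ x) k' :=
      (hll k' hk' hkc').sub (IntegrableOn.continuousOn_mul
        (Continuous.continuousOn ((continuous_const.add h.contDeriv).log
          (fun x => (h.pos x).ne'))) (hli k' hk' hkc') hkc')
    refine hi.congr (Eventually.of_forall fun x => ?_)
    simp only [h.pushD_apply]
    rw [← mul_assoc, mul_div_cancel₀ _ (h.pos x).ne']
    by_cases h0 : ρ x = 0
    · simp [h0]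
    · rw [Real.log_div h0 (h.pos x).ne']; ring

/-! ### Couplings induced by monotone maps -/

/-- The measure `ρ dx`. -/
def wd (ρ : ℝ → ℝ) : Measure ℝ := volume.withDensity (fun x => ENNReal.ofReal (ρ x))

/-- Both cases of the transport structure at once: `S` sends `σ dx⌊(0,a]` to `0` and
`σ dx⌊(a,X)` to `ρ⁰ dx⌊(b,X)`, while `ρ⁰ dx⌊(0,b)` comes from the atom at `0`. At most one of
`a`, `b` is nonzero, according to the sign of `M(σ,ρ⁰)`; optimality of `S` is not required. -/
structure PreTransport (ρ0 σ : ℝ → ℝ) (X : ℝ) (S : ℝ → ℝ) (a b : ℝ) : Prop where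
  a_nonneg : 0 ≤ a
  b_nonneg : 0 ≤ b
  a_lt : a < X
  b_le : b ≤ X
  ab : a = 0 ∨ b = 0
  meas : Measurable S
  mono : MonotoneOn S (Icc 0 X)
  maps : ∀ x ∈ Icc 0 X, S x ∈ Icc b X
  zero : ∀ x ∈ Ioc 0 a, S x = 0
  map : Measure.map S ((wd σ).restrict (Ioo a X)) = (wd ρ0).restrict (Ioo b X)
  massσ : ENNReal.ofReal (Mdiff σ ρ0) = wd σ (Ioc 0 a)
  massρ0 : ENNReal.ofReal (Mdiff ρ0 σ) = wd ρ0 (Ioo 0 b)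

lemma wd_restrict_congr (ρ : ℝ → ℝ) {s t : Set ℝ} (h : s =ᵐ[volume] t) :
    (wd ρ).restrict s = (wd ρ).restrict t :=
  Measure.restrict_congr_set ((withDensity_absolutelyContinuous _ _).ae_eq h)

lemma ae_ne (c : ℝ) : ∀ᵐ x : ℝ, x ≠ c := by
  rw [ae_iff]; simp

lemma wd_apply (ρ : ℝ → ℝ) {s : Set ℝ} (hs : MeasurableSet s) :
    wd ρ s = ∫⁻ x in s, ENNReal.ofReal (ρ x) := withDensity_apply _ hs

lemma wd_one {ρ : ℝ → ℝ} {Λ : ℝ} (h : ∀ᵐ y : ℝ, Λ < y → ρ y = 1) {s : Set ℝ}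
    (hs : MeasurableSet s) (hsub : s ⊆ Ioi Λ) : wd ρ s = volume s := by
  rw [wd_apply ρ hs]
  have : ∫⁻ x in s, ENNReal.ofReal (ρ x) = ∫⁻ x in s, 1 := by
    apply setLIntegral_congr_fun_ae hs
    filter_upwards [h] with y hy hys
    rw [hy (hsub hys)]; simp
  rw [this]; simp

/-- Where `σ = ρ⁰ = 1`, a monotone map transporting `σ` to `ρ⁰` is the identity: the masses
to the right of `x` and of `S x` agree. -/
lemma PreTransport.eq_id {ρ0 σ S : ℝ → ℝ} {X a b Λ : ℝ} (h : PreTransport ρ0 σ X S a b)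
    (hσ : ∀ᵐ y : ℝ, Λ < y → σ y = 1) (hρ : ∀ᵐ y : ℝ, Λ < y → ρ0 y = 1)
    {x : ℝ} (hx : Λ < x) (hax : a < x) (hxX : x < X) : S x = x := by
  have h0 := h.a_nonneg
  have hxI : x ∈ Icc 0 X := ⟨by linarith, hxX.le⟩
  apply le_antisymm
  · by_contra hc
    push Not at hc
    have h1 : (Measure.map S ((wd σ).restrict (Ioo a X))) (Ici (S x))
        = (wd ρ0).restrict (Ioo b X) (Ici (S x)) := by rw [h.map]
    rw [Measure.map_apply h.meas measurableSet_Ici,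
      Measure.restrict_apply (h.meas measurableSet_Ici),
      Measure.restrict_apply measurableSet_Ici] at h1
    have h2 : wd σ (Ioo x X) ≤ wd σ (S ⁻¹' Ici (S x) ∩ Ioo a X) := by
      apply measure_mono
      intro z hz
      exact ⟨h.mono hxI ⟨by linarith [hz.1], hz.2.le⟩ hz.1.le, hax.trans hz.1, hz.2⟩
    have h3 : wd ρ0 (Ici (S x) ∩ Ioo b X) ≤ wd ρ0 (Ico (S x) X) :=
      measure_mono (fun z hz => ⟨hz.1, hz.2.2⟩)
    rw [wd_one hσ measurableSet_Ioo (fun z hz => hx.trans hz.1)] at h2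
    rw [wd_one hρ measurableSet_Ico (fun z hz => (hx.trans hc).trans_le hz.1)] at h3
    have h4 := (h2.trans h1.le).trans h3
    rw [Real.volume_Ioo, Real.volume_Ico, ENNReal.ofReal_le_ofReal_iff'] at h4
    rcases h4 with h4 | h4 <;> linarith
  · by_contra hc
    push Not at hc
    have h1 : (Measure.map S ((wd σ).restrict (Ioo a X))) (Ioi (S x))
        = (wd ρ0).restrict (Ioo b X) (Ioi (S x)) := by rw [h.map]
    rw [Measure.map_apply h.meas measurableSet_Ioi,
      Measure.restrict_apply (h.meas measurableSet_Ioi),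
      Measure.restrict_apply measurableSet_Ioi] at h1
    have h2 : wd σ (S ⁻¹' Ioi (S x) ∩ Ioo a X) ≤ wd σ (Ioo x X) := by
      apply measure_mono
      rintro z ⟨hz, hza, hzX⟩
      refine ⟨?_, hzX⟩
      by_contra hzx
      exact absurd (h.mono ⟨by linarith, hzX.le⟩ hxI (not_lt.1 hzx)) (not_le.2 hz)
    have h3 : wd ρ0 (Ioo (max (S x) Λ) X) ≤ wd ρ0 (Ioi (S x) ∩ Ioo b X) := by
      apply measure_mono
      intro z hz
      have := lt_of_le_of_lt (le_max_left _ _) hz.1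
      exact ⟨this, (h.maps x hxI).1.trans_lt this, hz.2⟩
    rw [wd_one hσ measurableSet_Ioo (fun z hz => hx.trans hz.1)] at h2
    rw [wd_one hρ measurableSet_Ioo (fun z hz => lt_of_le_of_lt (le_max_right _ _) hz.1)] at h3
    have h4 := (h3.trans h1.symm.le).trans h2
    rw [Real.volume_Ioo, Real.volume_Ioo, ENNReal.ofReal_le_ofReal_iff'] at h4
    have := max_lt hc hx
    rcases h4 with h4 | h4 <;> linarith

/-- Mass balance: `S` cannot send a piece of `(Λ,X)` to `0`, nor take `ρ⁰` there from the atom. -/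
lemma PreTransport.le_Λ {ρ0 σ S : ℝ → ℝ} {X a b Λ : ℝ} (h : PreTransport ρ0 σ X S a b)
    (hΛ0 : 0 ≤ Λ)
    (hσ : ∀ᵐ y : ℝ, Λ < y → σ y = 1) (hρ : ∀ᵐ y : ℝ, Λ < y → ρ0 y = 1) :
    a ≤ Λ ∧ b ≤ Λ := by
  have h1 : (Measure.map S ((wd σ).restrict (Ioo a X))) univ
        = (wd ρ0).restrict (Ioo b X) univ := by rw [h.map]
  rw [Measure.map_apply h.meas MeasurableSet.univ] at h1
  simp only [preimage_univ, Measure.restrict_apply_univ] at h1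
  have hX := h.a_lt
  constructor
  · by_contra hc
    push Not at hc
    have hb : b = 0 := h.ab.resolve_left (by linarith)
    have h2 : wd ρ0 (Ioo Λ X) ≤ wd ρ0 (Ioo b X) :=
      measure_mono (Ioo_subset_Ioo (by linarith) le_rfl)
    rw [← h1, wd_one hρ measurableSet_Ioo (fun z hz => hz.1),
      wd_one hσ measurableSet_Ioo (fun z hz => hc.trans hz.1),
      Real.volume_Ioo, Real.volume_Ioo, ENNReal.ofReal_le_ofReal_iff'] at h2
    rcases h2 with h4 | h4 <;> linarith
  · by_contra hc
    push Not at hc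
    have ha : a = 0 := h.ab.resolve_right (by linarith)
    have h2 : wd σ (Ioo Λ X) ≤ wd σ (Ioo a X) :=
      measure_mono (Ioo_subset_Ioo (by linarith) le_rfl)
    have := h.b_le
    rw [h1, wd_one hσ measurableSet_Ioo (fun z hz => hz.1),
      wd_one hρ measurableSet_Ioo (fun z hz => hc.trans hz.1),
      Real.volume_Ioo, Real.volume_Ioo, ENNReal.ofReal_le_ofReal_iff'] at h2
    rcases h2 with h4 | h4 <;> linarith

/-- The transport restricts to `(0,Λ)` when both densities are `1` beyond `Λ`. -/
lemma PreTransport.map_Λ {ρ0 σ S : ℝ → ℝ} {X a b Λ : ℝ} (h : PreTransport ρ0 σ X S a b)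
    (hΛX : Λ ≤ X) (hΛ0 : 0 ≤ Λ)
    (hσ : ∀ᵐ y : ℝ, Λ < y → σ y = 1) (hρ : ∀ᵐ y : ℝ, Λ < y → ρ0 y = 1) :
    Measure.map S ((wd σ).restrict (Ioo a Λ)) = (wd ρ0).restrict (Ioo b Λ) := by
  obtain ⟨haΛ, hbΛ⟩ := h.le_Λ hΛ0 hσ hρ
  have h0 := h.a_nonneg
  have e1 : (wd ρ0).restrict (Ioo b Λ) = ((wd ρ0).restrict (Ioo b X)).restrict (Iic Λ) := by
    rw [Measure.restrict_restrict measurableSet_Iic]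
    apply wd_restrict_congr
    filter_upwards [ae_ne Λ, ae_ne X] with z hz hzX
    apply propext
    constructor
    · intro hh
      exact ⟨hh.2.le, hh.1, hh.2.trans_le hΛX⟩
    · intro hh
      exact ⟨hh.2.1, lt_of_le_of_ne hh.1 hz⟩
  rw [e1, ← h.map, Measure.restrict_map h.meas measurableSet_Iic,
    Measure.restrict_restrict (h.meas measurableSet_Iic)]
  congr 1
  apply wd_restrict_congr
  filter_upwards [ae_ne Λ] with z hz
  apply propext
  constructor
  · intro hh
    refine ⟨?_, hh.1, hh.2.trans_le hΛX⟩
    change S z ≤ Λ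
    have hzI : z ∈ Icc 0 X := ⟨by linarith [hh.1], by linarith [hh.2]⟩
    rcases hΛX.eq_or_lt with hE | hlt
    · rw [hE]; exact (h.maps z hzI).2
    · apply le_of_forall_gt_imp_ge_of_dense
      intro w hw
      rcases lt_or_ge w X with hwX | hwX
      · have := h.eq_id hσ hρ hw (haΛ.trans_lt hw) hwX
        rw [← this]
        exact h.mono hzI ⟨by linarith, hwX.le⟩ (hh.2.trans hw).le
      · exact (h.maps z hzI).2.trans hwX
  · rintro ⟨hS, hza, hzX⟩
    refine ⟨hza, ?_⟩
    by_contra hc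
    have hlt : Λ < z := lt_of_le_of_ne (not_lt.1 hc) (Ne.symm hz)
    have := h.eq_id hσ hρ hlt hza hzX
    have hS' : S z ≤ Λ := hS
    linarith

lemma integral_wd {ρ : ℝ → ℝ} {s : Set ℝ} (hs : MeasurableSet s) (h0 : ∀ᵐ x : ℝ, x ∈ s → 0 ≤ ρ x)
    (hi : IntegrableOn ρ s) (g : ℝ → ℝ) :
    ∫ x, g x ∂((wd ρ).restrict s) = ∫ x in s, g x * ρ x := by
  rw [wd, restrict_withDensity hs, integral_withDensity_eq_integral_toReal_smul₀
    hi.aestronglyMeasurable.aemeasurable.ennreal_ofReal (by simp)]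
  apply setIntegral_congr_ae hs
  filter_upwards [h0] with x hx hxs
  rw [ENNReal.toReal_ofReal (hx hxs), smul_eq_mul, mul_comm]

lemma wd_finite {ρ : ℝ → ℝ} {s : Set ℝ} (hs : MeasurableSet s)
    (hi : IntegrableOn ρ s) : wd ρ s < ⊤ := by
  rw [wd_apply _ hs]
  calc ∫⁻ x in s, ENNReal.ofReal (ρ x) ≤ ∫⁻ x in s, ‖ρ x‖ₑ := by
        apply lintegral_mono
        intro x
        simp only [Real.enorm_eq_ofReal_abs]
        exact ENNReal.ofReal_le_ofReal (le_abs_self _)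
    _ < ⊤ := hi.2

/-- The coupling built from `S` bounds the squared Wasserstein distance. -/
lemma PreTransport.W2_le {ρ0 σ S : ℝ → ℝ} {X a b : ℝ} (h : PreTransport ρ0 σ X S a b)
    (hσX : xA σ ≤ X) (hρX : xA ρ0 ≤ X)
    (hσe : ∃ x : ℝ, 0 < x ∧ (∀ᵐ y : ℝ, y ∈ Ioi x → σ y = 1))
    (hρe : ∃ x : ℝ, 0 < x ∧ (∀ᵐ y : ℝ, y ∈ Ioi x → ρ0 y = 1))
    (hσ0 : ∀ᵐ x : ℝ, 0 < x → 0 ≤ σ x) (hρ0 : ∀ᵐ x : ℝ, 0 < x → 0 ≤ ρ0 x)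
    (hσi : IntegrableOn σ (Ioo 0 X)) (hρi : IntegrableOn ρ0 (Ioo 0 X)) :
    W2sq σ ρ0 ≤ (∫ x in Ioo 0 X, (x - S x) ^ 2 * σ x) + ∫ y in Ioo 0 b, y ^ 2 * ρ0 y := by
  set Λ := max (xA σ) (xA ρ0) with hΛ
  have hΛX : Λ ≤ X := max_le hσX hρX
  have hΛ0 : 0 ≤ Λ := (xA_nonneg σ).trans (le_max_left _ _)
  have hσ1 : ∀ᵐ y : ℝ, Λ < y → σ y = 1 := by
    filter_upwards [ae_eq_one_of_xA_lt hσe] with y hy hlt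
    exact hy ((le_max_left _ _).trans_lt hlt)
  have hρ1 : ∀ᵐ y : ℝ, Λ < y → ρ0 y = 1 := by
    filter_upwards [ae_eq_one_of_xA_lt hρe] with y hy hlt
    exact hy ((le_max_right _ _).trans_lt hlt)
  obtain ⟨haΛ, hbΛ⟩ := h.le_Λ hΛ0 hσ1 hρ1
  have ha0 := h.a_nonneg
  have hb0 := h.b_nonneg
  have hX0 : 0 < X := ha0.trans_lt h.a_lt
  have mS : Measurable (fun x => (x, S x)) := measurable_id.prodMk h.meas
  have m0 : Measurable (fun y : ℝ => ((0:ℝ), y)) := measurable_const.prodMk measurable_id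
  set γ : Measure (ℝ × ℝ) := Measure.map (fun x => (x, S x)) ((wd σ).restrict (Ioo 0 Λ))
    + Measure.map (fun y => ((0:ℝ), y)) ((wd ρ0).restrict (Ioo 0 b)) with hγ
  have hsub : Ioo 0 Λ ⊆ Ioo 0 X := Ioo_subset_Ioo le_rfl hΛX
  have hsubb : Ioo 0 b ⊆ Ioo 0 X := Ioo_subset_Ioo le_rfl h.b_le
  have hfst : γ.map Prod.fst = nuMeas σ ρ0 := by
    rw [hγ, Measure.map_add _ _ measurable_fst, Measure.map_map measurable_fst mS,
      Measure.map_map measurable_fst m0]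
    have e1 : (Prod.fst ∘ fun x => (x, S x)) = id := rfl
    have e2 : (Prod.fst ∘ fun y : ℝ => ((0:ℝ), y)) = fun _ => (0:ℝ) := rfl
    rw [e1, e2, Measure.map_id, Measure.map_const, Measure.restrict_apply_univ, ← h.massρ0]
    rfl
  have hsnd : γ.map Prod.snd = nuMeas ρ0 σ := by
    rw [hγ, Measure.map_add _ _ measurable_snd, Measure.map_map measurable_snd mS,
      Measure.map_map measurable_snd m0]
    have e1 : (Prod.snd ∘ fun x => (x, S x)) = S := rfl
    have e2 : (Prod.snd ∘ fun y : ℝ => ((0:ℝ), y)) = id := rfl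
    rw [e1, e2, Measure.map_id]
    have e3 : (wd σ).restrict (Ioo 0 Λ) = (wd σ).restrict (Ioc 0 a) + (wd σ).restrict (Ioo a Λ) := by
      rw [← Measure.restrict_union _ measurableSet_Ioo]
      · apply wd_restrict_congr
        filter_upwards [ae_ne Λ] with z hz
        apply propext
        constructor
        · intro hh
          rcases le_or_gt z a with hza | hza
          · exact Or.inl ⟨hh.1, hza⟩
          · exact Or.inr ⟨hza, hh.2⟩
        · rintro (hh | hh)
          · exact ⟨hh.1, lt_of_le_of_ne (hh.2.trans haΛ) hz⟩
          · exact ⟨ha0.trans_lt hh.1, hh.2⟩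
      · rw [Set.disjoint_left]
        intro z hz hz'
        exact absurd hz.2 (not_le.2 hz'.1)
    have e4 : (wd ρ0).restrict (Ioo 0 Λ) = (wd ρ0).restrict (Ioo 0 b) + (wd ρ0).restrict (Ioo b Λ) := by
      rw [← Measure.restrict_union _ measurableSet_Ioo]
      · apply wd_restrict_congr
        filter_upwards [ae_ne b] with z hz
        apply propext
        constructor
        · intro hh
          rcases lt_or_gt_of_ne hz with hza | hza
          · exact Or.inl ⟨hh.1, hza⟩
          · exact Or.inr ⟨hza, hh.2⟩
        · rintro (hh | hh)
          · exact ⟨hh.1, hh.2.trans_le hbΛ⟩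
          · exact ⟨hb0.trans_lt hh.1, hh.2⟩
      · rw [Set.disjoint_left]
        intro z hz hz'
        exact lt_asymm hz.2 hz'.1
    have e5 : Measure.map S ((wd σ).restrict (Ioc 0 a)) =
        ENNReal.ofReal (Mdiff σ ρ0) • Measure.dirac 0 := by
      have : S =ᵐ[(wd σ).restrict (Ioc 0 a)] fun _ => 0 := by
        filter_upwards [ae_restrict_mem measurableSet_Ioc] with z hz
        exact h.zero z hz
      rw [Measure.map_congr this, Measure.map_const, Measure.restrict_apply_univ, h.massσ]
    rw [e3, Measure.map_add _ _ h.meas, h.map_Λ hΛX hΛ0 hσ1 hρ1, e5]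
    have e6 : nuMeas ρ0 σ = (wd ρ0).restrict (Ioo 0 Λ)
        + ENNReal.ofReal (Mdiff σ ρ0) • Measure.dirac 0 := by
      rw [hΛ, max_comm]; rfl
    rw [e6, e4]
    abel
  have hbdd : BddBelow {r : ℝ | ∃ γ : Measure (ℝ × ℝ),
      γ.map Prod.fst = nuMeas σ ρ0 ∧ γ.map Prod.snd = nuMeas ρ0 σ ∧
      r = ∫ p, (p.1 - p.2)^2 ∂γ} := by
    refine ⟨0, ?_⟩
    rintro r ⟨g, -, -, rfl⟩
    exact integral_nonneg (fun p => sq_nonneg _)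
  have hle : W2sq σ ρ0 ≤ ∫ p, (p.1 - p.2)^2 ∂γ := csInf_le hbdd ⟨γ, hfst, hsnd, rfl⟩
  refine hle.trans ?_
  have mq : Measurable (fun p : ℝ × ℝ => (p.1 - p.2) ^ 2) :=
    (measurable_fst.sub measurable_snd).pow_const 2
  have f1 : IsFiniteMeasure ((wd σ).restrict (Ioo 0 Λ)) :=
    ⟨by rw [Measure.restrict_apply_univ]; exact wd_finite measurableSet_Ioo (hσi.mono_set hsub)⟩
  have f2 : IsFiniteMeasure ((wd ρ0).restrict (Ioo 0 b)) :=
    ⟨by rw [Measure.restrict_apply_univ]; exact wd_finite measurableSet_Ioo (hρi.mono_set hsubb)⟩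
  have hbnd : ∀ x ∈ Ioo 0 X, ‖(x - S x) ^ 2‖ ≤ X ^ 2 := by
    intro x hx
    have hh := h.maps x ⟨hx.1.le, hx.2.le⟩
    rw [Real.norm_eq_abs, abs_of_nonneg (sq_nonneg _)]
    apply sq_le_sq'
    · linarith [hx.1, hh.2]
    · linarith [hx.2, hh.1]
  have i1 : Integrable (fun p : ℝ × ℝ => (p.1 - p.2) ^ 2)
      (Measure.map (fun x => (x, S x)) ((wd σ).restrict (Ioo 0 Λ))) := by
    rw [integrable_map_measure mq.aestronglyMeasurable mS.aemeasurable]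
    apply Integrable.of_bound (mq.comp mS).aestronglyMeasurable (X ^ 2)
    filter_upwards [ae_restrict_mem measurableSet_Ioo] with x hx
    exact hbnd x (hsub hx)
  have i2 : Integrable (fun p : ℝ × ℝ => (p.1 - p.2) ^ 2)
      (Measure.map (fun y => ((0:ℝ), y)) ((wd ρ0).restrict (Ioo 0 b))) := by
    rw [integrable_map_measure mq.aestronglyMeasurable m0.aemeasurable]
    apply Integrable.of_bound (mq.comp m0).aestronglyMeasurable (X ^ 2)
    filter_upwards [ae_restrict_mem measurableSet_Ioo] with x hx
    have hx' := hsubb hx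
    simp only [Function.comp, Real.norm_eq_abs]
    rw [abs_of_nonneg (sq_nonneg _)]
    apply sq_le_sq' <;> linarith [hx'.1, hx'.2]
  rw [hγ, integral_add_measure i1 i2, integral_map mS.aemeasurable mq.aestronglyMeasurable,
    integral_map m0.aemeasurable mq.aestronglyMeasurable]
  rw [integral_wd measurableSet_Ioo (hσ0.mono fun x hx hxs => hx hxs.1) (hσi.mono_set hsub),
    integral_wd measurableSet_Ioo (hρ0.mono fun x hx hxs => hx hxs.1) (hρi.mono_set hsubb)]
  apply add_le_add
  · apply setIntegral_mono_set
    · exact Integrable.bdd_mul (c := X ^ 2) hσi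
        ((measurable_id.sub h.meas).pow_const 2).aestronglyMeasurable
        ((ae_restrict_iff' measurableSet_Ioo).2 (Eventually.of_forall hbnd))
    · filter_upwards [ae_restrict_mem measurableSet_Ioo, ae_restrict_of_ae hσ0] with x hx h0
      exact mul_nonneg (sq_nonneg _) (h0 hx.1)
    · exact hsub.eventuallyLE
  · apply le_of_eq
    congr 1
    ext y
    ring

/-- An inner variation carries the transport map along. -/
lemma PreTransport.deform {ρ0 ρ T η Ψ : ℝ → ℝ} {X a b : ℝ} (h : PreTransport ρ0 ρ X T a b)
    (d : Deform X η Ψ) (hM : Mdiff (pushD ρ η Ψ) ρ0 = Mdiff ρ ρ0) :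
    PreTransport ρ0 (pushD ρ η Ψ) X (T ∘ Ψ) (a + η a) b := by
  have hI : ∀ x ∈ Icc 0 X, Ψ x ∈ Icc 0 X := by
    intro x hx
    refine ⟨?_, ?_⟩
    · rw [d.le_psi, d.eta0]; linarith [hx.1]
    · rw [d.psi_le, d.etaX]; linarith [hx.2]
  have pre1 : Ψ ⁻¹' (Ioo a X) = Ioo (a + η a) X := by
    ext y; simp [d.lt_psi, d.psi_lt_X]
  have pre2 : Ψ ⁻¹' (Ioc 0 a) = Ioc 0 (a + η a) := by
    ext y; simp [d.psi_pos, d.psi_le]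
  have hM' : Mdiff ρ0 (pushD ρ η Ψ) = Mdiff ρ0 ρ := by
    unfold Mdiff at hM ⊢; linarith
  refine ⟨?_, h.b_nonneg, ?_, h.b_le, ?_, h.meas.comp d.meas, ?_, ?_, ?_, ?_, ?_, ?_⟩
  · have := d.strictMono.monotone h.a_nonneg
    simpa [d.eta0] using this
  · have := d.strictMono h.a_lt
    simpa [d.etaX] using this
  · rcases h.ab with ha | hb
    · left; rw [ha, d.eta0, add_zero]
    · exact Or.inr hb
  · intro x hx y hy hxy
    exact h.mono (hI x hx) (hI y hy) (d.mono.monotone hxy)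
  · intro x hx
    exact h.maps _ (hI x hx)
  · intro x hx
    rw [← pre2] at hx
    exact h.zero _ hx
  · rw [← h.map, ← Measure.map_map h.meas d.meas, ← pre1]
    congr 1
    exact d.map_restrict measurableSet_Ioo ρ
  · rw [hM, h.massσ, ← pre2]
    exact (d.withDensity_apply_preimage measurableSet_Ioc ρ).symm
  · rw [hM', h.massρ0]

/-! ### First variation of the functional -/

lemma integrableOn_Ioi_of_zero {X : ℝ} {g : ℝ → ℝ} (h0 : ∀ x, x ∉ Ioo 0 X → g x = 0)
    (hi : IntegrableOn g (Ioo 0 X)) : IntegrableOn g (Ioi 0) :=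
  hi.of_forall_sdiff_eq_zero measurableSet_Ioi (fun x hx => h0 x hx.2)

lemma setIntegral_Ioi_of_zero {X : ℝ} {g : ℝ → ℝ} (h0 : ∀ x, x ∉ Ioo 0 X → g x = 0) :
    ∫ x in Ioi 0, g x = ∫ x in Ioo 0 X, g x :=
  setIntegral_eq_of_subset_of_forall_sdiff_eq_zero measurableSet_Ioi Ioo_subset_Ioi_self
    (fun x hx => h0 x hx.2)

namespace Deform

variable {X : ℝ} {η Ψ : ℝ → ℝ}

lemma dint (h : Deform X η Ψ) : IntegrableOn (deriv η) (Ioi 0) :=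
  integrableOn_Ioi_of_zero h.dzero
    ((h.contDeriv.integrableOn_Icc (a := 0) (b := X)).mono_set Ioo_subset_Icc_self)

lemma dint_zero (h : Deform X η Ψ) (hX : 0 < X) : ∫ x in Ioi 0, deriv η x = 0 := by
  rw [setIntegral_Ioi_of_zero h.dzero, ← integral_Ioc_eq_integral_Ioo,
    ← intervalIntegral.integral_of_le hX.le,
    intervalIntegral.integral_deriv_eq_sub
      (fun x _ => h.smooth.differentiable (by norm_num) x)
      (h.contDeriv.intervalIntegrable _ _), h.eta0, h.etaX, sub_zero]

/-- Inner variations preserve the mass. -/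
lemma Mfun_eq (h : Deform X η Ψ) (hX : 0 < X) {ρ : ℝ → ℝ}
    (hi : IntegrableOn (fun x => 1 - ρ x) (Ioi 0)) : Mfun (pushD ρ η Ψ) = Mfun ρ := by
  unfold Mfun
  congr 1
  conv_lhs => rw [← h.pre_Ioi]
  rw [h.setIntegral measurableSet_Ioi]
  have : ∀ x, (1 + deriv η x) * (1 - pushD ρ η Ψ (x + η x)) = (1 - ρ x) + deriv η x := by
    intro x
    rw [h.pushD_apply, mul_sub, mul_div_cancel₀ _ (h.pos x).ne']
    ring
  simp only [this]
  rw [integral_add hi h.dint, h.dint_zero hX, add_zero]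

lemma fEnt_pushD (h : Deform X η Ψ) (β : ℝ) (ρ : ℝ → ℝ) (x : ℝ) :
    (1 + deriv η x) * fEnt β (pushD ρ η Ψ (x + η x))
      = fEnt β (ρ x) - Real.log (1 + deriv η x) * ρ x + β * deriv η x := by
  rw [h.pushD_apply, fEnt, fEnt, mul_add, ← mul_assoc, mul_div_cancel₀ _ (h.pos x).ne']
  by_cases h0 : ρ x = 0
  · simp [h0]; ring
  · rw [Real.log_div h0 (h.pos x).ne']; ring

lemma log_mul_int (h : Deform X η Ψ) {ρ : ℝ → ℝ} (hρ : IntegrableOn ρ (Ioo 0 X)) :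
    IntegrableOn (fun x => Real.log (1 + deriv η x) * ρ x) (Ioi 0) := by
  apply integrableOn_Ioi_of_zero (X := X)
  · intro x hx
    rw [h.dzero x hx]; simp
  · have hc : Continuous (fun x => Real.log (1 + deriv η x)) :=
      (continuous_const.add h.contDeriv).log (fun x => (h.pos x).ne')
    obtain ⟨C, hC⟩ := (isCompact_Icc (a := (0:ℝ)) (b := X)).exists_bound_of_continuousOn
      hc.continuousOn
    exact Integrable.bdd_mul (c := C) hρ hc.aestronglyMeasurable
      ((ae_restrict_iff' measurableSet_Ioo).2
        (Eventually.of_forall fun x hx => hC x (Ioo_subset_Icc_self hx)))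

/-- Change of the entropy under an inner variation, when it is finite. -/
lemma entropy_eq (h : Deform X η Ψ) (hX : 0 < X) {β : ℝ} {ρ : ℝ → ℝ}
    (hρ : IntegrableOn ρ (Ioo 0 X)) (hf : IntegrableOn (fun x => fEnt β (ρ x)) (Ioi 0)) :
    ∫ x in Ioi 0, fEnt β (pushD ρ η Ψ x)
      = (∫ x in Ioi 0, fEnt β (ρ x)) - ∫ x in Ioo 0 X, Real.log (1 + deriv η x) * ρ x := by
  conv_lhs => rw [← h.pre_Ioi]
  rw [h.setIntegral measurableSet_Ioi]
  simp only [h.fEnt_pushD]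
  have hsub : IntegrableOn (fun x => fEnt β (ρ x) - Real.log (1 + deriv η x) * ρ x) (Ioi 0) :=
    hf.sub (h.log_mul_int hρ)
  rw [integral_add hsub (h.dint.const_mul β),
    integral_sub hf (h.log_mul_int hρ), integral_const_mul, h.dint_zero hX, mul_zero, add_zero,
    setIntegral_Ioi_of_zero (X := X)
      (g := fun x => Real.log (1 + deriv η x) * ρ x) (fun x hx => by rw [h.dzero x hx]; simp)]

/-- Inner variations preserve non-integrability of the entropy density, so that both entropy
integrals take the junk value `0`. -/
lemma entropy_junk (h : Deform X η Ψ) {β : ℝ} {ρ : ℝ → ℝ}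
    (hρ : IntegrableOn ρ (Ioo 0 X)) (hf : ¬ IntegrableOn (fun x => fEnt β (ρ x)) (Ioi 0)) :
    ∫ x in Ioi 0, fEnt β (pushD ρ η Ψ x) = ∫ x in Ioi 0, fEnt β (ρ x) := by
  rw [integral_undef hf, integral_undef]
  intro hc
  apply hf
  change IntegrableOn (fun x => fEnt β (pushD ρ η Ψ x)) (Ioi 0) volume at hc
  rw [← h.pre_Ioi, h.integrableOn measurableSet_Ioi] at hc
  simp only [h.fEnt_pushD] at hc
  have h2 := Integrable.add (Integrable.sub hc (h.dint.const_mul β)) (h.log_mul_int hρ)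
  refine h2.congr (Eventually.of_forall fun x => ?_)
  simp

end Deform

/-- First-order condition: `p` vanishes if `t p + t² q` has a minimum at `t = 0`. -/
lemma eq_zero_of_quadratic {ε p q : ℝ} (hε : 0 < ε)
    (h : ∀ t, |t| ≤ ε → 0 ≤ t * p + t ^ 2 * q) : p = 0 := by
  have hd : HasDerivAt (fun t => t * p + t ^ 2 * q) p 0 := by
    have := ((hasDerivAt_id' (0:ℝ)).mul_const p).fun_add
      (((hasDerivAt_id' (0:ℝ)).fun_pow 2).mul_const q)
    simpa using this
  have hm : IsLocalMin (fun t => t * p + t ^ 2 * q) 0 := by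
    filter_upwards [Metric.closedBall_mem_nhds (0:ℝ) hε] with t ht
    simpa using h t (by simpa using ht)
  exact hm.hasDerivAt_eq_zero hd

lemma le_log_one_add {u : ℝ} (hu : |u| ≤ 1 / 2) : u - 2 * u ^ 2 ≤ Real.log (1 + u) := by
  have h1 := abs_le.1 hu
  have hp : 0 < 1 + u := by linarith [h1.1]
  refine le_trans ?_ (Real.one_sub_inv_le_log_of_pos hp)
  rw [← sub_nonneg]
  have : 1 - (1 + u)⁻¹ - (u - 2 * u ^ 2) = u ^ 2 * (1 + 2 * u) / (1 + u) := by
    field_simp; ring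
  rw [this]
  apply div_nonneg (mul_nonneg (sq_nonneg _) (by linarith [h1.1])) hp.le

/-- First variation of the functional along inner variations. The number `κ` is `1` when the
entropy of `ρ` is finite; otherwise the entropy is a junk constant along the
variation and does not contribute, which is recorded by `κ = 0`. -/
lemma first_variation {lam α β θ τ Kτ mτ X0 X a b κ : ℝ} {ρ0 ρ T : ℝ → ℝ}
    (hτ : 0 < τ) (hmin : IsJKOMin lam α β θ τ Kτ mτ X0 ρ0 X ρ)
    (hP : PreTransport ρ0 ρ X T a b)
    (hW : W2sq ρ ρ0 = (∫ x in Ioo 0 X, (x - T x) ^ 2 * ρ x) + ∫ y in Ioo 0 b, y ^ 2 * ρ0 y)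
    (hρX : xA ρ0 ≤ X)
    (hρe : ∃ x : ℝ, 0 < x ∧ (∀ᵐ y : ℝ, y ∈ Ioi x → ρ0 y = 1))
    (hρ0 : ∀ᵐ x : ℝ, 0 < x → 0 ≤ ρ0 x)
    (hρ0i : IntegrableOn ρ0 (Ioo 0 X)) (hρi : IntegrableOn ρ (Ioo 0 X))
    (h1 : IntegrableOn (fun x => 1 - ρ x) (Ioi 0))
    (hκ : (κ = 1 ∧ IntegrableOn (fun x => fEnt β (ρ x)) (Ioi 0)) ∨
      (κ = 0 ∧ ¬ IntegrableOn (fun x => fEnt β (ρ x)) (Ioi 0)))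
    (ξ : ℝ → ℝ) (hξ : ContDiff ℝ 1 ξ) (hξc : tsupport ξ ⊆ Ioo 0 X) :
    (∫ x in Ioo 0 X, ξ x * (x - T x) * ρ x) / τ - κ * ∫ x in Ioo 0 X, deriv ξ x * ρ x = 0 := by
  have hX : 0 < X := hP.a_nonneg.trans_lt hP.a_lt
  have hz : ∀ x, x ∉ Ioo 0 X → ξ x = 0 := fun x hx =>
    image_eq_zero_of_notMem_tsupport (fun hh => hx (hξc hh))
  have hdz : ∀ x, x ∉ Ioo 0 X → deriv ξ x = 0 := fun x hx =>
    image_eq_zero_of_notMem_tsupport (fun hh => hx (hξc (tsupport_deriv_subset hh)))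
  have hdc : Continuous (deriv ξ) := hξ.continuous_deriv (by norm_num)
  obtain ⟨C0, hC0⟩ := (isCompact_Icc (a := (0:ℝ)) (b := X)).exists_bound_of_continuousOn
    hdc.continuousOn
  set C := max C0 1 with hC
  have hCpos : 0 < C := lt_of_lt_of_le one_pos (le_max_right _ _)
  have hCb : ∀ x, |deriv ξ x| ≤ C := by
    intro x
    by_cases hx : x ∈ Ioo 0 X
    · exact (hC0 x (Ioo_subset_Icc_self hx)).trans (le_max_left _ _)
    · rw [hdz x hx, abs_zero]; exact hCpos.le
  have bint : ∀ g : ℝ → ℝ, Measurable g → (∃ c, ∀ x ∈ Ioo 0 X, |g x| ≤ c) →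
      IntegrableOn (fun x => g x * ρ x) (Ioo 0 X) := by
    rintro g hg ⟨c, hc⟩
    exact Integrable.bdd_mul (c := c) hρi hg.aestronglyMeasurable
      ((ae_restrict_iff' measurableSet_Ioo).2 (Eventually.of_forall hc))
  have cbd : ∀ g : ℝ → ℝ, Continuous g → ∃ c, ∀ x ∈ Ioo 0 X, |g x| ≤ c := by
    intro g hg
    obtain ⟨c, hc⟩ := (isCompact_Icc (a := (0:ℝ)) (b := X)).exists_bound_of_continuousOn
      hg.continuousOn
    exact ⟨c, fun x hx => hc x (Ioo_subset_Icc_self hx)⟩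
  have hTb : ∀ x ∈ Ioo 0 X, |x - T x| ≤ X := by
    intro x hx
    have hh := hP.maps x ⟨hx.1.le, hx.2.le⟩
    have := hP.b_nonneg
    rw [abs_le]
    constructor <;> linarith [hx.1, hx.2, hh.1, hh.2]
  obtain ⟨cξ, hcξ⟩ := cbd ξ hξ.continuous
  have hTm : Measurable (fun x => x - T x) := measurable_id.sub hP.meas
  have iA : IntegrableOn (fun x => ξ x * (x - T x) * ρ x) (Ioo 0 X) := by
    apply bint (fun x => ξ x * (x - T x)) (hξ.continuous.measurable.mul hTm)
    refine ⟨cξ * X, fun x hx => ?_⟩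
    rw [abs_mul]
    exact mul_le_mul (hcξ x hx) (hTb x hx) (abs_nonneg _) ((abs_nonneg _).trans (hcξ x hx))
  have iT : IntegrableOn (fun x => (x - T x) ^ 2 * ρ x) (Ioo 0 X) := by
    apply bint (fun x => (x - T x) ^ 2) (hTm.pow_const 2)
    refine ⟨X ^ 2, fun x hx => ?_⟩
    rw [abs_pow]
    exact pow_le_pow_left₀ (abs_nonneg _) (hTb x hx) 2
  have iB : IntegrableOn (fun x => ξ x ^ 2 * ρ x) (Ioo 0 X) :=
    bint _ (hξ.continuous.pow 2).measurable (cbd _ (hξ.continuous.pow 2))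
  have iD : IntegrableOn (fun x => deriv ξ x * ρ x) (Ioo 0 X) :=
    bint _ hdc.measurable (cbd _ hdc)
  have iE : IntegrableOn (fun x => deriv ξ x ^ 2 * ρ x) (Ioo 0 X) :=
    bint _ (hdc.pow 2).measurable (cbd _ (hdc.pow 2))
  set A := ∫ x in Ioo 0 X, ξ x * (x - T x) * ρ x with hA
  set B := ∫ x in Ioo 0 X, ξ x ^ 2 * ρ x with hB
  set D := ∫ x in Ioo 0 X, deriv ξ x * ρ x with hD
  set E := ∫ x in Ioo 0 X, deriv ξ x ^ 2 * ρ x with hE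
  apply eq_zero_of_quadratic (ε := 1 / (2 * C)) (q := B / (2 * τ) + κ * (2 * E)) (by positivity)
  intro t ht
  have hdt : ∀ x, deriv (fun y => t * ξ y) x = t * deriv ξ x := fun x => deriv_const_mul_field t
  have hbt : ∀ x, |t * deriv ξ x| ≤ 1 / 2 := by
    intro x
    rw [abs_mul]
    calc |t| * |deriv ξ x| ≤ 1 / (2 * C) * C :=
          mul_le_mul ht (hCb x) (abs_nonneg _) (by positivity)
      _ = 1 / 2 := by field_simp
  obtain ⟨Ψ, d⟩ := exists_deform X (fun y => t * ξ y) (contDiff_const.mul hξ)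
    (fun x hx => by simp [hz x hx]) (fun x hx => by rw [hdt, hdz x hx, mul_zero])
    (fun x => by rw [hdt]; exact hbt x)
  set σ := pushD ρ (fun y => t * ξ y) Ψ with hσ
  have hadm : MemAdmSet X σ := d.memAdmSet hX hmin.1
  have hM : Mdiff σ ρ0 = Mdiff ρ ρ0 := by
    unfold Mdiff; rw [hσ, d.Mfun_eq hX h1]
  have hpa : ∀ x, σ (x + t * ξ x) = ρ x / (1 + deriv (fun y => t * ξ y) x) :=
    fun x => d.pushD_apply ρ x
  have hl : ∀ x, Ψ (x + t * ξ x) = x := fun x => d.left x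
  have hσi : IntegrableOn σ (Ioo 0 X) := by
    rw [← d.pre_Ioo, d.integrableOn measurableSet_Ioo]
    refine hρi.congr (Eventually.of_forall fun x => ?_)
    change ρ x = (1 + deriv (fun y => t * ξ y) x) * σ (x + t * ξ x)
    rw [hpa, mul_div_cancel₀ _ (d.pos x).ne']
  have hW2 := (hP.deform d hM).W2_le hadm.2 hρX hadm.1.2.2.2 hρe hadm.1.1 hρ0 hσi hρ0i
  have hcost : ∫ x in Ioo 0 X, (x - (T ∘ Ψ) x) ^ 2 * σ x
      = (∫ x in Ioo 0 X, (x - T x) ^ 2 * ρ x) + 2 * t * A + t ^ 2 * B := by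
    have iTA : IntegrableOn (fun x => (x - T x) ^ 2 * ρ x + 2 * t * (ξ x * (x - T x) * ρ x))
        (Ioo 0 X) := iT.add (iA.const_mul _)
    conv_lhs => rw [← d.pre_Ioo]
    rw [d.setIntegral measurableSet_Ioo, hA, hB, ← integral_const_mul, ← integral_const_mul,
      ← integral_add iT (iA.const_mul _), ← integral_add iTA (iB.const_mul _)]
    apply setIntegral_congr_fun measurableSet_Ioo
    intro x _
    have hp := (d.pos x).ne'
    simp only [Function.comp, hl, hpa]
    rw [mul_left_comm, mul_div_cancel₀ _ hp]
    ring
  have hlog : t * D - 2 * t ^ 2 * E ≤ ∫ x in Ioo 0 X, Real.log (1 + t * deriv ξ x) * ρ x := by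
    rw [hD, hE, ← integral_const_mul, ← integral_const_mul,
      ← integral_sub (iD.const_mul _) (iE.const_mul _)]
    have iDE : IntegrableOn (fun x => t * (deriv ξ x * ρ x) - 2 * t ^ 2 * (deriv ξ x ^ 2 * ρ x))
        (Ioo 0 X) := (iD.const_mul _).sub (iE.const_mul _)
    apply setIntegral_mono_ae_restrict iDE
    · have hs : Ioo 0 X ⊆ Ioi (0:ℝ) := fun x hx => hx.1
      have := (d.log_mul_int hρi).mono_set hs
      simpa only [hdt] using this
    · filter_upwards [ae_restrict_mem measurableSet_Ioo, ae_restrict_of_ae hmin.1.1.1] with x hx h0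
      have := mul_le_mul_of_nonneg_right (le_log_one_add (hbt x)) (h0 hx.1)
      refine le_trans (le_of_eq ?_) this
      ring
  have hJ := hmin.2 X σ hadm
  have hent : ∫ x in Ioi 0, fEnt β (σ x) ≤ (∫ x in Ioi 0, fEnt β (ρ x))
      - κ * (t * D - 2 * t ^ 2 * E) := by
    rcases hκ with ⟨rfl, hf⟩ | ⟨rfl, hf⟩
    · rw [hσ, d.entropy_eq hX hρi hf]
      simp only [hdt]
      linarith
    · rw [hσ, d.entropy_junk hρi hf]; simp
  unfold Jfun Efun dsq at hJ
  rw [hM] at hJ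
  -- Compare the functional at `σ` and at `ρ`; the mass terms and the `X` terms cancel.
  have hWd : W2sq σ ρ0 ≤ W2sq ρ ρ0 + (2 * t * A + t ^ 2 * B) := by
    rw [hW]
    rw [hcost] at hW2
    linarith
  have h3 : (W2sq σ ρ0 + lam * (X - X0) ^ 2) / (2 * τ) ≤
      (W2sq ρ ρ0 + lam * (X - X0) ^ 2) / (2 * τ) + (2 * t * A + t ^ 2 * B) / (2 * τ) := by
    rw [← add_div]
    apply div_le_div_of_nonneg_right _ (by positivity)
    linarith
  have h4 : (2 * t * A + t ^ 2 * B) / (2 * τ) = t * (A / τ) + t ^ 2 * (B / (2 * τ)) := by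
    field_simp
  have h5 : 0 ≤ t * (A / τ) + t ^ 2 * (B / (2 * τ)) - κ * (t * D - 2 * t ^ 2 * E) := by
    linarith
  linarith

/-! ### The initial density -/

lemma wd_eq_ofReal {f : ℝ → ℝ} {s : Set ℝ} (hs : MeasurableSet s)
    (h0 : ∀ᵐ x : ℝ, x ∈ s → 0 ≤ f x) (hi : IntegrableOn f s) :
    wd f s = ENNReal.ofReal (∫ x in s, f x) := by
  rw [wd_apply f hs, ofReal_integral_eq_lintegral_ofReal hi ((ae_restrict_iff' hs).2 h0)]

namespace H2

variable {β θ X0 ρmin ρmax X : ℝ} {ρ0 ρ0' : ℝ → ℝ}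

lemma le_one (h : H2 β θ X0 ρmin ρmax ρ0 ρ0') {x : ℝ} (hx : 0 < x) : ρ0 x ≤ 1 := by
  obtain ⟨-, -, -, -, h1, -, -, hb, hm⟩ := h
  rcases le_or_gt x X0 with hl | hl
  · exact (hb x ⟨hx, hl⟩).2.trans hm
  · exact (h1 x hl).le

lemma continuousOn (h : H2 β θ X0 ρmin ρmax ρ0 ρ0') : ContinuousOn ρ0 (Icc 0 X0) :=
  fun x hx => (h.2.2.1 x hx).continuousWithinAt

lemma integrableOn_one_sub (h : H2 β θ X0 ρmin ρmax ρ0 ρ0') :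
    IntegrableOn (fun x => 1 - ρ0 x) (Ioi 0) := by
  have h1 : IntegrableOn (fun x => 1 - ρ0 x) (Icc 0 X0) :=
    (continuousOn_const.sub h.continuousOn).integrableOn_Icc
  refine (h1.mono_set Ioc_subset_Icc_self).of_forall_sdiff_eq_zero measurableSet_Ioi ?_
  intro x hx
  have : X0 < x := by
    by_contra hc
    exact hx.2 ⟨hx.1, not_lt.1 hc⟩
  rw [h.2.2.2.2.1 x this, sub_self]

lemma integrableOn (h : H2 β θ X0 ρmin ρmax ρ0 ρ0') (X : ℝ) : IntegrableOn ρ0 (Ioo 0 X) := by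
  have h1 : IntegrableOn (fun x => 1 - ρ0 x) (Ioo 0 X) :=
    h.integrableOn_one_sub.mono_set (fun x hx => hx.1)
  have h2 : IntegrableOn (fun _ : ℝ => (1:ℝ)) (Ioo 0 X) := by simp [integrableOn_const_iff]
  refine (Integrable.sub h2 h1).congr (Eventually.of_forall fun x => ?_)
  simp

/-- The initial mass deficit is positive: `ρ⁰(0) ≤ exp(β + θ - 1) < 1`. -/
lemma deficit_pos (h : H2 β θ X0 ρmin ρmax ρ0 ρ0') (hβθ : β + θ < 1) :
    0 < ∫ x in Ioi 0, (1 - ρ0 x) := by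
  have hX0 : 0 < X0 := h.1
  have h00 : ρ0 0 < 1 := by
    refine h.2.2.2.2.2.1.2.trans_lt ?_
    unfold rhoPlus
    rw [Real.exp_lt_one_iff]
    linarith
  have hc := h.continuousOn 0 ⟨le_rfl, hX0.le⟩
  have hev : ∀ᶠ x in 𝓝[Icc 0 X0] 0, ρ0 x < 1 := hc.eventually (gt_mem_nhds h00)
  obtain ⟨δ, hδ, hsub⟩ := Metric.mem_nhdsWithin_iff.1 hev
  rw [setIntegral_pos_iff_support_of_nonneg_ae
    ((ae_restrict_iff' measurableSet_Ioi).2 (Eventually.of_forall fun x hx =>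
      sub_nonneg.2 (h.le_one hx))) h.integrableOn_one_sub]
  have hs : Ioo 0 (min δ X0) ⊆ Function.support (fun x => 1 - ρ0 x) ∩ Ioi 0 := by
    intro x hx
    have h1 : x < δ := hx.2.trans_le (min_le_left _ _)
    have h2 : x < X0 := hx.2.trans_le (min_le_right _ _)
    have h3 : ρ0 x < 1 := by
      apply hsub
      refine ⟨?_, hx.1.le, h2.le⟩
      rw [Metric.mem_ball, Real.dist_eq, sub_zero, abs_of_pos hx.1]
      exact h1
    exact ⟨(sub_pos.2 h3).ne', hx.1⟩
  refine lt_of_lt_of_le ?_ (measure_mono hs)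
  rw [Real.volume_Ioo, sub_zero, ENNReal.ofReal_pos]
  exact lt_min hδ hX0

lemma wd_pos (h : H2 β θ X0 ρmin ρmax ρ0 ρ0') (hX : 0 < X) : 0 < wd ρ0 (Ioo 0 X) := by
  have hp : ∀ x, 0 < ρ0 x := h.2.1
  rw [wd_eq_ofReal measurableSet_Ioo (Eventually.of_forall fun x _ => (hp x).le)
    (h.integrableOn X), ENNReal.ofReal_pos,
    setIntegral_pos_iff_support_of_nonneg_ae (Eventually.of_forall fun x => (hp x).le)
      (h.integrableOn X)]
  have : Function.support ρ0 = univ := eq_univ_of_forall fun x => (hp x).ne'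
  rw [this, univ_inter, Real.volume_Ioo, sub_zero, ENNReal.ofReal_pos]
  exact hX

end H2

/-! ### Integrability of the minimizing density -/

lemma MemAdm.aesm {ρ : ℝ → ℝ} (h : MemAdm ρ) : AEStronglyMeasurable ρ (volume.restrict (Ioi 0)) :=
  h.2.1.aestronglyMeasurable

lemma MemAdm.integrableOn_iff {ρ : ℝ → ℝ} (h : MemAdm ρ) {c X : ℝ} (hc : 0 ≤ c) :
    IntegrableOn ρ (Ioo c X) ↔ wd ρ (Ioo c X) ≠ ⊤ := by
  have hs : Ioo c X ⊆ Ioi 0 := fun x hx => hc.trans_lt hx.1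
  rw [wd_apply ρ measurableSet_Ioo, lintegral_ofReal_ne_top_iff_integrable
    (h.aesm.mono_set hs), IntegrableOn]
  rw [EventuallyLE, ae_restrict_iff' measurableSet_Ioo]
  filter_upwards [h.1] with x hx hxs using hx (hs hxs)

lemma integrableOn_one_sub_iff {ρ : ℝ → ℝ} {X : ℝ} (hev : ∀ᵐ x : ℝ, X < x → ρ x = 1) :
    IntegrableOn (fun x => 1 - ρ x) (Ioi 0) ↔ IntegrableOn ρ (Ioo 0 X) := by
  have h2 : IntegrableOn (fun _ : ℝ => (1:ℝ)) (Ioo 0 X) := by simp [integrableOn_const_iff]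
  constructor
  · intro h
    have h1 : IntegrableOn (fun x => 1 - ρ x) (Ioo 0 X) := h.mono_set (fun x hx => hx.1)
    refine (Integrable.sub h2 h1).congr (Eventually.of_forall fun x => ?_)
    simp
  · intro h
    have h1 : IntegrableOn (fun x => 1 - ρ x) (Ioo 0 X) := h2.sub h
    refine h1.of_ae_sdiff_eq_zero measurableSet_Ioi.nullMeasurableSet ?_
    filter_upwards [hev, ae_ne X] with x hx hxX hxs
    have : X < x := by
      rcases lt_trichotomy x X with hl | hl | hl
      · exact absurd ⟨hxs.1, hl⟩ hxs.2
      · exact absurd hl hxX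
      · exact hl
    rw [hx this, sub_self]

/-- A density which is not integrable near `0` has junk mass functional `0`, so that the mass
difference is positive and the transport structure is that of `M ≥ 0`; the push-forward identity
and the formula for `M` then still bound the mass of `ρ` on `(0,X)`. -/
lemma density_integrable {β θ X0 ρmin ρmax X ℓ : ℝ} {ρ0 ρ0' ρ Tmap : ℝ → ℝ}
    (hH2 : H2 β θ X0 ρmin ρmax ρ0 ρ0') (hβθ : β + θ < 1)
    (hρ : MemAdm ρ) (hev : ∀ᵐ x : ℝ, X < x → ρ x = 1)
    (htrans : TransportStruct ρ0 ρ X Tmap ℓ) : IntegrableOn ρ (Ioo 0 X) := by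
  by_contra hni
  have hM : Mdiff ρ ρ0 = ∫ x in Ioi 0, (1 - ρ0 x) := by
    have : Mfun ρ = 0 := by
      rw [Mfun, integral_undef, neg_zero]
      exact fun hc => hni ((integrableOn_one_sub_iff hev).1 hc)
    rw [Mdiff, this, Mfun, sub_neg_eq_add, zero_add]
  have hMpos : 0 < Mdiff ρ ρ0 := hM ▸ hH2.deficit_pos hβθ
  rcases htrans with ⟨-, -, ℓp, h0, hTm, -, -, -, -, hmap, hMℓ, -⟩ | ⟨hneg, -⟩
  · have hfin : wd ρ (Ioo ℓp X) ≠ ⊤ := by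
      have h1 : (Measure.map Tmap ((wd ρ).restrict (Ioo ℓp X))) univ
        = (wd ρ0).restrict (Ioo 0 X) univ := congrArg (fun μ : Measure ℝ => μ univ) hmap
      rw [Measure.map_apply hTm MeasurableSet.univ, preimage_univ,
        Measure.restrict_apply_univ, Measure.restrict_apply_univ] at h1
      rw [h1, wd_eq_ofReal measurableSet_Ioo (Eventually.of_forall fun x _ => (hH2.2.1 x).le)
        (hH2.integrableOn X)]
      exact ENNReal.ofReal_ne_top
    have hi1 := (hρ.integrableOn_iff h0).2 hfin
    have hi2 : IntervalIntegrable ρ volume 0 ℓp := by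
      by_contra hc
      rw [intervalIntegral.integral_undef hc] at hMℓ
      linarith
    rw [intervalIntegrable_iff_integrableOn_Ioc_of_le h0] at hi2
    apply hni
    refine (hi2.union hi1).mono_set ?_
    intro x hx
    rcases le_or_gt x ℓp with hl | hl
    · exact Or.inl ⟨hx.1, hl⟩
    · exact Or.inr ⟨hl, hx.2⟩
  · linarith

/-- Both signs of the mass difference yield a `PreTransport` realizing the Wasserstein cost. -/
lemma exists_preTransport {β θ X0 ρmin ρmax X ℓ : ℝ} {ρ0 ρ0' ρ Tmap : ℝ → ℝ}
    (hH2 : H2 β θ X0 ρmin ρmax ρ0 ρ0') (hX : 0 < X)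
    (hρ : MemAdm ρ) (hρi : IntegrableOn ρ (Ioo 0 X))
    (htrans : TransportStruct ρ0 ρ X Tmap ℓ) :
    ∃ a b, PreTransport ρ0 ρ X Tmap a b ∧
      W2sq ρ ρ0 = (∫ x in Ioo 0 X, (x - Tmap x) ^ 2 * ρ x) + ∫ y in Ioo 0 b, y ^ 2 * ρ0 y := by
  have hanti : Mdiff ρ0 ρ = -Mdiff ρ ρ0 := by unfold Mdiff; ring
  have hpos := hH2.wd_pos hX
  rcases htrans with ⟨hM, -, ℓp, h0, hTm, hmono, hmaps, hz, hTX, hmap, hMℓ, hW⟩ |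
    ⟨hM, h0, hTm, hmono, hmaps, hT0, hTX, hmap, hMℓ, hW⟩
  · have hlt : ℓp < X := by
      by_contra hc
      have h1 : (Measure.map Tmap ((wd ρ).restrict (Ioo ℓp X))) univ
        = (wd ρ0).restrict (Ioo 0 X) univ := congrArg (fun μ : Measure ℝ => μ univ) hmap
      rw [Measure.map_apply hTm MeasurableSet.univ, preimage_univ,
        Measure.restrict_apply_univ, Measure.restrict_apply_univ,
        Ioo_eq_empty hc, measure_empty] at h1
      exact hpos.ne h1
    refine ⟨ℓp, 0, ⟨h0, le_rfl, hlt, hX.le, Or.inr rfl, hTm, hmono, hmaps,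
      fun x hx => hz x ⟨hx.1.le, hx.2⟩, hmap, ?_, ?_⟩, ?_⟩
    · rw [wd_eq_ofReal measurableSet_Ioc
        (by filter_upwards [hρ.1] with x hx hxs using hx hxs.1)
        (hρi.mono_set fun x hx => ⟨hx.1, hx.2.trans_lt hlt⟩), hMℓ,
        intervalIntegral.integral_of_le h0]
    · rw [hanti, ENNReal.ofReal_of_nonpos (by linarith)]
      simp
    · rw [hW, intervalIntegral.integral_of_le hX.le, integral_Ioc_eq_integral_Ioo]
      simp
  · have hle : ℓ ≤ X := by
      have := (hmaps X ⟨hX.le, le_rfl⟩).1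
      rwa [hTX] at this
    refine ⟨0, ℓ, ⟨le_rfl, h0.le, hX, hle, Or.inl rfl, hTm, hmono, hmaps,
      fun x hx => absurd hx.1 (not_lt.2 hx.2), hmap, ?_, ?_⟩, ?_⟩
    · rw [ENNReal.ofReal_of_nonpos hM.le]
      simp
    · rw [hanti, hMℓ, wd_eq_ofReal measurableSet_Ioo
        (Eventually.of_forall fun x _ => (hH2.2.1 x).le) (hH2.integrableOn ℓ),
        intervalIntegral.integral_of_le h0.le, integral_Ioc_eq_integral_Ioo]
    · rw [hW, intervalIntegral.integral_of_le hX.le, integral_Ioc_eq_integral_Ioo,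
        intervalIntegral.integral_of_le h0.le, integral_Ioc_eq_integral_Ioo]

/-! ### Integrability of the entropy density -/

/-- If the transport moves no mass of `ρ`, then `ρ` vanishes where `T = 0` and coincides with
`ρ⁰ ≤ 1` elsewhere. -/
lemma PreTransport.le_one {ρ0 ρ T : ℝ → ℝ} {X a b : ℝ} (h : PreTransport ρ0 ρ X T a b)
    (hρ : MemAdm ρ) (hle : ∀ x, 0 < x → ρ0 x ≤ 1)
    (hst : ∀ᵐ x : ℝ, x ∈ Ioo 0 X → (x - T x) * ρ x = 0) :
    ∀ᵐ x : ℝ, x ∈ Ioo 0 X → ρ x ≤ 1 := by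
  have ha := h.a_nonneg
  have hsub : Ioo a X ⊆ Ioi 0 := fun x hx => ha.trans_lt hx.1
  have hm : AEMeasurable (fun x => ENNReal.ofReal (ρ x)) (volume.restrict (Ioo a X)) :=
    (hρ.aesm.mono_set hsub).aemeasurable.ennreal_ofReal
  have hid : T =ᵐ[(wd ρ).restrict (Ioo a X)] id := by
    rw [wd, restrict_withDensity measurableSet_Ioo, EventuallyEq, ae_withDensity_iff' hm,
      ae_restrict_iff' measurableSet_Ioo]
    filter_upwards [hst] with x hx hxs hne
    have hr : ρ x ≠ 0 := fun hc => hne (by simp [hc])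
    have := (mul_eq_zero.1 (hx ⟨hsub hxs, hxs.2⟩)).resolve_right hr
    simp only [id]
    linarith
  have heq : (wd ρ).restrict (Ioo a X) = (wd ρ0).restrict (Ioo b X) := by
    rw [← h.map, Measure.map_congr hid, Measure.map_id]
  have hle1 : (fun x => ENNReal.ofReal (ρ x)) ≤ᵐ[volume.restrict (Ioo a X)] fun _ => 1 := by
    apply ae_le_of_forall_setLIntegral_le_of_sigmaFinite₀ hm
    intro s hs _
    calc ∫⁻ x in s, ENNReal.ofReal (ρ x) ∂(volume.restrict (Ioo a X))
        = (wd ρ).restrict (Ioo a X) s := by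
          rw [Measure.restrict_restrict hs, Measure.restrict_apply hs,
            wd_apply ρ (hs.inter measurableSet_Ioo)]
      _ = (wd ρ).restrict (Ioo a X) (s ∩ Ioo a X) := by
          rw [Measure.restrict_apply hs, Measure.restrict_apply (hs.inter measurableSet_Ioo),
            inter_assoc, inter_self]
      _ = wd ρ0 (s ∩ Ioo a X ∩ Ioo b X) := by
          rw [heq, Measure.restrict_apply (hs.inter measurableSet_Ioo)]
      _ ≤ wd ρ0 (s ∩ Ioo a X) := measure_mono inter_subset_left
      _ ≤ ∫⁻ x in s ∩ Ioo a X, 1 := by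
          rw [wd_apply ρ0 (hs.inter measurableSet_Ioo)]
          apply setLIntegral_mono' (hs.inter measurableSet_Ioo)
          intro x hx
          exact ENNReal.ofReal_le_one.2 (hle x (hsub hx.2))
      _ = ∫⁻ x in s, 1 ∂(volume.restrict (Ioo a X)) := by
          rw [Measure.restrict_restrict hs]
  rw [EventuallyLE, ae_restrict_iff' measurableSet_Ioo] at hle1
  filter_upwards [hle1, hst] with x h1 h2 hx
  rcases le_or_gt x a with hl | hl
  · have h3 := h2 hx
    rw [h.zero x ⟨hx.1, hl⟩, sub_zero] at h3
    rw [(mul_eq_zero.1 h3).resolve_left hx.1.ne']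
    exact zero_le_one
  · exact ENNReal.ofReal_le_one.1 (h1 ⟨hl, hx.2⟩)

lemma entropy_integrable_of_le_one {ρ : ℝ → ℝ} {X : ℝ} (β : ℝ) (hρ : MemAdm ρ)
    (hev : ∀ᵐ x : ℝ, X < x → ρ x = 1) (hle : ∀ᵐ x : ℝ, x ∈ Ioo 0 X → ρ x ≤ 1) :
    IntegrableOn (fun x => fEnt β (ρ x)) (Ioi 0) := by
  have hfc : Continuous (fEnt β) := by
    have : fEnt β = fun r => r * Real.log r - β * r + β := by
      funext r; unfold fEnt; ring
    rw [this]
    exact (Real.continuous_mul_log.sub (continuous_const.mul continuous_id)).add continuous_const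
  obtain ⟨C, hC⟩ := (isCompact_Icc (a := (0:ℝ)) (b := 1)).exists_bound_of_continuousOn
    hfc.continuousOn
  have hs : Ioo 0 X ⊆ Ioi (0:ℝ) := fun x hx => hx.1
  have h1 : IntegrableOn (fun x => fEnt β (ρ x)) (Ioo 0 X) := by
    refine Integrable.of_bound (hfc.comp_aestronglyMeasurable (hρ.aesm.mono_set hs)) C ?_
    rw [ae_restrict_iff' measurableSet_Ioo]
    filter_upwards [hle, hρ.1] with x hx h0 hxs using hC _ ⟨h0 hxs.1, hx hxs⟩
  refine h1.of_ae_sdiff_eq_zero measurableSet_Ioi.nullMeasurableSet ?_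
  filter_upwards [hev, ae_ne X] with x hx hxX hxs
  have : X < x := by
    rcases lt_trichotomy x X with hl | hl | hl
    · exact absurd ⟨hxs.1, hl⟩ hxs.2
    · exact absurd hl hxX
    · exact hl
  rw [hx this]
  simp [fEnt]

/-- Proposition 3.1, Euler–Lagrange equation in the oxide layer.
Let `(X, ρ)` be a minimizer of the JKO functional with `X ≥ X⁰`, and let `Tmap` be the
monotone optimal transport map of its transport structure. Then for every test
function `ξ ∈ C_c^∞(0,X)`:
`∫₀^X ξ(x) ((x − T(x))/τ) ρ(x) dx − ∫₀^X ρ(x) ξ'(x) dx = 0`. -/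
theorem euler_lagrange_in_oxide_layer
    (lam α β θ T X0 ρmin ρmax τ mτ Kτ : ℝ) (ρ0 ρ0' : ℝ → ℝ)
    (hlam : 0 < lam) (hα : 0 < α) (hθ : 0 < θ) (hβθ : β + θ < 1) (hT : 0 < T)
    (hH2 : H2 β θ X0 ρmin ρmax ρ0 ρ0')
    (hτ0 : 0 < τ) (hτ1 : τ < 1) (hmτ : 0 < mτ) (hKτ : 0 < Kτ)
    (X : ℝ) (ρ : ℝ → ℝ)
    (hmin : IsJKOMin lam α β θ τ Kτ mτ X0 ρ0 X ρ) (hXX0 : X0 ≤ X)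
    (Tmap : ℝ → ℝ) (ℓ : ℝ)
    (htrans : TransportStruct ρ0 ρ X Tmap ℓ) :
    ∀ ξ : ℝ → ℝ, ContDiff ℝ (⊤ : ℕ∞) ξ → tsupport ξ ⊆ Ioo 0 X →
      (∫ x in (0:ℝ)..X, ξ x * ((x - Tmap x) / τ) * ρ x)
        - (∫ x in (0:ℝ)..X, ρ x * deriv ξ x) = 0 := by
  have hX : 0 < X := hH2.1.trans_le hXX0
  have hρ : MemAdm ρ := hmin.1.1
  have hev : ∀ᵐ x : ℝ, X < x → ρ x = 1 := by
    filter_upwards [ae_eq_one_of_xA_lt hρ.2.2.2] with x hx hxX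
    exact hx (hmin.1.2.trans_lt hxX)
  have hρi := density_integrable hH2 hβθ hρ hev htrans
  obtain ⟨a, b, hP, hW⟩ := exists_preTransport hH2 hX hρ hρi htrans
  have h1 := (integrableOn_one_sub_iff hev).2 hρi
  have hone : ∀ᵐ y : ℝ, X < y → ρ0 y = 1 :=
    Eventually.of_forall fun y hy => hH2.2.2.2.2.1 y (hXX0.trans_lt hy)
  have hFV : ∀ κ : ℝ, ((κ = 1 ∧ IntegrableOn (fun x => fEnt β (ρ x)) (Ioi 0)) ∨
      (κ = 0 ∧ ¬ IntegrableOn (fun x => fEnt β (ρ x)) (Ioi 0))) →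
      ∀ ξ : ℝ → ℝ, ContDiff ℝ (⊤ : ℕ∞) ξ → tsupport ξ ⊆ Ioo 0 X →
      (∫ x in Ioo 0 X, ξ x * (x - Tmap x) * ρ x) / τ
        - κ * ∫ x in Ioo 0 X, deriv ξ x * ρ x = 0 := fun κ hκ ξ hξ hξc =>
    first_variation hτ0 hmin hP hW (xA_le hX hone) ⟨X, hX, hone⟩
      (Eventually.of_forall fun x _ => (hH2.2.1 x).le) (hH2.integrableOn X) hρi h1 hκ ξ
      (hξ.of_le (by exact_mod_cast le_top)) hξc
  have hent : IntegrableOn (fun x => fEnt β (ρ x)) (Ioi 0) := by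
    by_contra hni
    -- Otherwise the entropy drops out of the first variation, so that no mass is moved.
    apply hni
    apply entropy_integrable_of_le_one β hρ hev
    apply hP.le_one hρ (fun x hx => hH2.le_one hx)
    have hg : IntegrableOn (fun x => (x - Tmap x) * ρ x) (Ioo 0 X) := by
      refine Integrable.bdd_mul (c := X) hρi
        (measurable_id.sub hP.meas).aestronglyMeasurable ?_
      rw [ae_restrict_iff' measurableSet_Ioo]
      refine Eventually.of_forall fun x hx => ?_
      have hh := hP.maps x ⟨hx.1.le, hx.2.le⟩
      have := hP.b_nonneg
      rw [Real.norm_eq_abs, abs_le]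
      constructor <;> linarith [hx.1, hx.2, hh.1, hh.2]
    apply isOpen_Ioo.ae_eq_zero_of_integral_contDiff_smul_eq_zero hg.locallyIntegrableOn
    intro g hgs _ hgsub
    have h2 := hFV 0 (Or.inr ⟨rfl, hni⟩) g hgs hgsub
    rw [zero_mul, sub_zero, _root_.div_eq_zero_iff] at h2
    have h3 := h2.resolve_right hτ0.ne'
    rw [← h3]
    have hz : ∀ x, x ∉ Ioo 0 X → g x * (x - Tmap x) * ρ x = 0 := fun x hx => by
      rw [image_eq_zero_of_notMem_tsupport (fun hh => hx (hgsub hh)), zero_mul, zero_mul]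
    rw [setIntegral_eq_integral_of_forall_compl_eq_zero hz]
    simp only [smul_eq_mul, mul_assoc]
  intro ξ hξ hξc
  have hmain := hFV 1 (Or.inl ⟨rfl, hent⟩) ξ hξ hξc
  rw [intervalIntegral.integral_of_le hX.le, intervalIntegral.integral_of_le hX.le,
    integral_Ioc_eq_integral_Ioo, integral_Ioc_eq_integral_Ioo]
  rw [one_mul, ← integral_div] at hmain
  have e1 : ∀ x, ξ x * ((x - Tmap x) / τ) * ρ x = ξ x * (x - Tmap x) * ρ x / τ := fun x => by ring
  have e2 : ∀ x, ρ x * deriv ξ x = deriv ξ x * ρ x := fun x => mul_comm _ _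
  simp only [e1, e2]
  exact hmain

end
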